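/- arXiv:1811.06955 — 2 statements merged into one kernel-verified Lean document; each statement's English description precedes it below -/
import Mathlib

section
/- Let R be a commutative ring, M an R-module, and φ : M → R an R-linear map. Let U(φ) = {x ∈ M : φ(x) + 1 is a unit of R}, with operations x ▷ y = (φ(y) + 1)·x − φ(x)·y and x ▷⁻¹ y = (φ(y) + 1)⁻¹·(x + φ(x)·y). Then (U(φ), ▷, ▷⁻¹) is a quandle: U(φ) is closed under both operations, and for all x, y, z ∈ U(φ) one has (Q1) x ▷ x = x, (Q2) (x ▷ y) ▷⁻¹ y = x = (x ▷⁻¹ y) ▷ y, and (Q3) (x ▷ y) ▷ z = (x ▷ z) ▷ (y ▷ z). -/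
/-- The operation `x ▷ y = (φ(y) + 1) • x - φ(x) • y` on an `R`-module `M`. -/
def tri {R M : Type*} [CommRing R] [AddCommGroup M] [Module R M]
    (φ : M →ₗ[R] R) (x y : M) : M :=
  (φ y + 1) • x - φ x • y

/-- The operation `x ▷⁻¹ y = (φ(y) + 1)⁻¹ • (x + φ(x) • y)` on an `R`-module `M`,
where `(φ(y) + 1)⁻¹` is `Ring.inverse (φ y + 1)` (the inverse when `φ(y) + 1` is a unit). -/
noncomputable def triInv {R M : Type*} [CommRing R] [AddCommGroup M] [Module R M]
    (φ : M →ₗ[R] R) (x y : M) : M :=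
  Ring.inverse (φ y + 1) • (x + φ x • y)

/-! Right translation `x ↦ x ▷ z` is linear and preserves `φ`. Since `▷` is built from the module
operations and `φ` alone, every linear map preserving `φ` respects `▷`; self-distributivity (Q3)
is this fact applied to right translation by `z`. Because `φ (x ▷ y) = φ x`, solving
`x' = (φ y + 1) • x - φ x • y` for `x` only requires inverting `φ y + 1`, which gives `▷⁻¹`. -/

section

variable {R M N : Type*} [CommRing R] [AddCommGroup M] [Module R M] [AddCommGroup N] [Module R N]

theorem tri_self (φ : M →ₗ[R] R) (x : M) : tri φ x x = x := by
  rw [tri, add_smul, one_smul, add_sub_cancel_left]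

theorem apply_tri (φ : M →ₗ[R] R) (x y : M) : φ (tri φ x y) = φ x := by
  simp only [tri, map_sub, map_smul, smul_eq_mul]
  ring

theorem map_tri_of_apply_eq {φ : M →ₗ[R] R} {ψ : N →ₗ[R] R} (f : M →ₗ[R] N)
    (hf : ∀ x, ψ (f x) = φ x) (x y : M) : f (tri φ x y) = tri ψ (f x) (f y) := by
  simp only [tri, map_sub, map_smul, hf]

/-- Right translation `x ↦ x ▷ z` of the operation `▷`, as a linear map; linearity is what makes
`map_tri_of_apply_eq` applicable to it. -/
def triRight (φ : M →ₗ[R] R) (z : M) : M →ₗ[R] M :=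
  (φ z + 1) • LinearMap.id - φ.smulRight z

theorem triRight_apply (φ : M →ₗ[R] R) (z x : M) : triRight φ z x = tri φ x z :=
  rfl

theorem tri_tri_distrib (φ : M →ₗ[R] R) (x y z : M) :
    tri φ (tri φ x y) z = tri φ (tri φ x z) (tri φ y z) := by
  simpa only [triRight_apply] using
    map_tri_of_apply_eq (triRight φ z) (fun w => apply_tri φ w z) x y

theorem apply_triInv (φ : M →ₗ[R] R) (x : M) {y : M} (hy : IsUnit (φ y + 1)) :
    φ (triInv φ x y) = φ x :=
  calc
    φ (triInv φ x y) = Ring.inverse (φ y + 1) * (φ x + φ x * φ y) := by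
      simp only [triInv, map_add, map_smul, smul_eq_mul]
    _ = Ring.inverse (φ y + 1) * (φ y + 1) * φ x := by ring
    _ = φ x := by rw [Ring.inverse_mul_cancel _ hy, one_mul]

theorem triInv_tri (φ : M →ₗ[R] R) (x : M) {y : M} (hy : IsUnit (φ y + 1)) :
    triInv φ (tri φ x y) y = x := by
  rw [triInv, apply_tri, tri, sub_add_cancel, smul_smul, Ring.inverse_mul_cancel _ hy, one_smul]

theorem tri_triInv (φ : M →ₗ[R] R) (x : M) {y : M} (hy : IsUnit (φ y + 1)) :
    tri φ (triInv φ x y) y = x := by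
  rw [tri, apply_triInv φ x hy, triInv, smul_smul, Ring.mul_inverse_cancel _ hy, one_smul,
    add_sub_cancel_right]

end

/-- `U(φ) = {x ∈ M | φ(x) + 1 is a unit of R}` with the operations `▷`, `▷⁻¹` is a quandle:
it is closed under both operations and the quandle axioms (Q1), (Q2), (Q3) hold on it. -/
theorem U_quandle {R M : Type*} [CommRing R] [AddCommGroup M] [Module R M]
    (φ : M →ₗ[R] R) (U : Set M) (hU : U = {x : M | IsUnit (φ x + 1)}) :
    ∀ x ∈ U, ∀ y ∈ U,
      tri φ x y ∈ U ∧
      triInv φ x y ∈ U ∧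
      tri φ x x = x ∧
      triInv φ (tri φ x y) y = x ∧
      tri φ (triInv φ x y) y = x ∧
      ∀ z ∈ U, tri φ (tri φ x y) z = tri φ (tri φ x z) (tri φ y z) := by
  subst hU
  intro x hx y hy
  have tri_mem : IsUnit (φ (tri φ x y) + 1) := by rwa [apply_tri]
  have triInv_mem : IsUnit (φ (triInv φ x y) + 1) := by rwa [apply_triInv φ x hy]
  exact ⟨tri_mem, triInv_mem, tri_self φ x, triInv_tri φ x hy, tri_triInv φ x hy,
    fun z _ => tri_tri_distrib φ x y z⟩
end

section
/- Let Λ₂ = ℤ[t₁^{±1}, t₂^{±1}] be the ring of Laurent polynomials in two variables with integer coefficients. Then the Λ₂-modules Λ₂ ⊕ Λ₂/(2t₁ − t₁²) ⊕ Λ₂/(2t₁ − 1) ⊕ Λ₂ and Λ₂ ⊕ Λ₂/(t₁ + t₂ − t₁t₂) ⊕ Λ₂/(t₁ + t₂ − 1) ⊕ Λ₂ are not isomorphic as Λ₂-modules. -/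
/-- `Λ₂ = ℤ[t₁^{±1}, t₂^{±1}]`, the ring of Laurent polynomials in two variables with
integer coefficients, realized as the additive monoid algebra of `ℤ` over the group
`Fin 2 →₀ ℤ`. -/
abbrev Lambda2 : Type := AddMonoidAlgebra ℤ (Fin 2 →₀ ℤ)

/-- The variable `tᵢ` of `Λ₂`, the monomial corresponding to the `i`-th standard generator. -/
noncomputable def tvar (i : Fin 2) : Lambda2 :=
  AddMonoidAlgebra.single (Finsupp.single i 1) 1

/-!
The annihilator of the torsion submodule is an isomorphism invariant. For nonzero `a` and `b`, the
torsion of `Λ₂ ⊕ Λ₂/(a) ⊕ Λ₂/(b) ⊕ Λ₂` is the middle part, with annihilator `(a) ∩ (b)`. If the two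
modules were isomorphic, the product of `2t₁ - t₁²` and `2t₁ - 1` would thus be divisible by
`t₁ + t₂ - 1`, yet at `(t₁, t₂) = (-1, 2)` it takes the value `9` while `t₁ + t₂ - 1` vanishes.
-/

section Torsion

open Submodule nonZeroDivisors

section CommSemiring

variable {R M N : Type*} [CommSemiring R] [AddCommMonoid M] [Module R M]
  [AddCommMonoid N] [Module R N]

theorem annihilator_torsion_le_of_injective (f : M →ₗ[R] N) (hf : Function.Injective f) :
    (torsion R N).annihilator ≤ (torsion R M).annihilator := by
  have mapsTo : Set.MapsTo f (torsion R M) (torsion R N) := by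
    rintro x ⟨a, hax⟩
    exact ⟨a, by rw [← f.map_smul_of_tower, hax, map_zero]⟩
  exact (f.restrict mapsTo).annihilator_le_of_injective
    (mapsTo.restrict_inj.2 hf.injOn)

theorem annihilator_torsion_eq_of_linearEquiv (e : M ≃ₗ[R] N) :
    (torsion R M).annihilator = (torsion R N).annihilator :=
  (annihilator_torsion_le_of_injective e.symm.toLinearMap e.symm.injective).antisymm
    (annihilator_torsion_le_of_injective e.toLinearMap e.injective)

theorem torsion_prod : torsion R (M × N) = (torsion R M).prod (torsion R N) := by
  ext ⟨x, y⟩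
  constructor
  · rintro ⟨a, h⟩
    exact ⟨⟨a, congrArg Prod.fst h⟩, ⟨a, congrArg Prod.snd h⟩⟩
  · rintro ⟨⟨a, hax⟩, ⟨b, hby⟩⟩
    refine ⟨a * b, Prod.ext ?_ ?_⟩
    · change (a * b) • x = 0
      rw [mul_comm, mul_smul, hax, smul_zero]
    · change (a * b) • y = 0
      rw [mul_smul, hby, smul_zero]

theorem annihilator_submodule_prod (P : Submodule R M) (Q : Submodule R N) :
    (P.prod Q).annihilator = P.annihilator ⊓ Q.annihilator := by
  ext r
  simp only [mem_annihilator, mem_inf, mem_prod, Prod.forall, Prod.smul_mk, Prod.mk_eq_zero]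
  exact ⟨fun h ↦ ⟨fun x hx ↦ (h x 0 ⟨hx, zero_mem Q⟩).1, fun y hy ↦ (h 0 y ⟨zero_mem P, hy⟩).2⟩,
    fun h x y hxy ↦ ⟨h.1 x hxy.1, h.2 y hxy.2⟩⟩

theorem annihilator_torsion_prod :
    (torsion R (M × N)).annihilator = (torsion R M).annihilator ⊓ (torsion R N).annihilator := by
  rw [torsion_prod, annihilator_submodule_prod]

end CommSemiring

variable {R : Type*} [CommRing R]

theorem torsion_quotient_span_singleton {a : R} (ha : a ∈ R⁰) :
    torsion R (R ⧸ Ideal.span {a}) = ⊤ := by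
  refine eq_top_iff.2 fun q _ ↦ ⟨⟨a, ha⟩, ?_⟩
  exact Module.mem_annihilator.1
    (Ideal.annihilator_quotient.ge (Ideal.mem_span_singleton_self a)) q

theorem annihilator_torsion_quotient_span_singleton {a : R} (ha : a ∈ R⁰) :
    (torsion R (R ⧸ Ideal.span {a})).annihilator = Ideal.span {a} := by
  rw [torsion_quotient_span_singleton ha, annihilator_top, Ideal.annihilator_quotient]

theorem annihilator_torsion_of_flat (M : Type*) [AddCommGroup M] [Module R M] [Module.Flat R M] :
    (torsion R M).annihilator = ⊤ := by
  rw [Module.Flat.torsion_eq_bot, annihilator_bot]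

theorem annihilator_torsion_prod_quotient {a b : R} (ha : a ∈ R⁰) (hb : b ∈ R⁰) :
    (torsion R (R × (R ⧸ Ideal.span {a}) × (R ⧸ Ideal.span {b}) × R)).annihilator =
      Ideal.span {a} ⊓ Ideal.span {b} := by
  simp only [annihilator_torsion_prod, annihilator_torsion_of_flat,
    annihilator_torsion_quotient_span_singleton ha, annihilator_torsion_quotient_span_singleton hb,
    top_inf_eq, inf_top_eq]

theorem dvd_mul_of_linearEquiv_prod_quotient {a b c d : R}
    (ha : a ∈ R⁰) (hb : b ∈ R⁰) (hc : c ∈ R⁰) (hd : d ∈ R⁰)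
    (e : (R × (R ⧸ Ideal.span {a}) × (R ⧸ Ideal.span {b}) × R) ≃ₗ[R]
      (R × (R ⧸ Ideal.span {c}) × (R ⧸ Ideal.span {d}) × R)) : d ∣ a * b := by
  have inf_eq : Ideal.span {a} ⊓ Ideal.span {b} = Ideal.span {c} ⊓ Ideal.span {d} := by
    rw [← annihilator_torsion_prod_quotient ha hb, annihilator_torsion_eq_of_linearEquiv e,
      annihilator_torsion_prod_quotient hc hd]
  have mem_inf : a * b ∈ Ideal.span {a} ⊓ Ideal.span {b} :=
    ⟨Ideal.mem_span_singleton.2 (dvd_mul_right a b), Ideal.mem_span_singleton.2 (dvd_mul_left b a)⟩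
  exact Ideal.mem_span_singleton.1 (inf_eq.le mem_inf).2

end Torsion

namespace Lambda2

variable {R : Type*} [CommRing R]

/-- Evaluation `tᵢ ↦ v i` of Laurent polynomials in two variables; the values must be units because
the variables are invertible. -/
noncomputable def eval (v : Fin 2 → Rˣ) : Lambda2 →ₐ[ℤ] R :=
  AddMonoidAlgebra.lift ℤ R (Fin 2 →₀ ℤ) <| (Units.coeHom R).comp <|
    AddMonoidHom.toMultiplicativeLeft <|
      Finsupp.liftAddHom fun i ↦ zmultiplesHom (Additive Rˣ) (.ofMul (v i))

@[simp]
theorem eval_tvar (v : Fin 2 → Rˣ) (i : Fin 2) : eval v (tvar i) = v i := by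
  simp [eval, tvar, AddMonoidAlgebra.lift_single]

theorem mem_nonZeroDivisors_of_eval_ne_zero (v : Fin 2 → Rˣ) {p : Lambda2}
    (hp : eval v p ≠ 0) : p ∈ nonZeroDivisors Lambda2 :=
  mem_nonZeroDivisors_of_ne_zero fun h ↦ hp (by rw [h, map_zero])

end Lambda2

/-- The `Λ₂`-modules `Λ₂ ⊕ Λ₂/(2t₁ - t₁²) ⊕ Λ₂/(2t₁ - 1) ⊕ Λ₂` and
`Λ₂ ⊕ Λ₂/(t₁ + t₂ - t₁t₂) ⊕ Λ₂/(t₁ + t₂ - 1) ⊕ Λ₂` are not isomorphic. -/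
theorem alexander_modules_not_isomorphic :
    ¬ Nonempty
      ((Lambda2 × (Lambda2 ⧸ Ideal.span {2 * tvar 0 - tvar 0 ^ 2}) ×
          (Lambda2 ⧸ Ideal.span {2 * tvar 0 - 1}) × Lambda2) ≃ₗ[Lambda2]
        (Lambda2 × (Lambda2 ⧸ Ideal.span {tvar 0 + tvar 1 - tvar 0 * tvar 1}) ×
          (Lambda2 ⧸ Ideal.span {tvar 0 + tvar 1 - 1}) × Lambda2)) := by
  rintro ⟨e⟩
  have dvd : tvar 0 + tvar 1 - 1 ∣ (2 * tvar 0 - tvar 0 ^ 2) * (2 * tvar 0 - 1) := by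
    refine dvd_mul_of_linearEquiv_prod_quotient ?_ ?_ ?_ ?_ e <;>
      exact Lambda2.mem_nonZeroDivisors_of_eval_ne_zero (1 : Fin 2 → ℤˣ) (by norm_num [map_ofNat])
  let v : Fin 2 → ℚˣ := ![-1, Units.mk0 2 two_ne_zero]
  have eval_divisor : Lambda2.eval v (tvar 0 + tvar 1 - 1) = 0 := by
    norm_num [v, map_ofNat]
  have eval_product :
      Lambda2.eval v ((2 * tvar 0 - tvar 0 ^ 2) * (2 * tvar 0 - 1)) = 9 := by
    norm_num [v, map_ofNat]
  have zero_dvd_nine : (0 : ℚ) ∣ 9 := eval_divisor ▸ eval_product ▸ map_dvd (Lambda2.eval v) dvd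
  norm_num at zero_dvd_nine
end
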